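/- Let S₁, S₂ ⊆ ℝ^n be closed convex sets whose relative interiors intersect (ri(S₁) ∩ ri(S₂) ≠ ∅), let u ∈ ℝ^n, let η ∈ (0, 2), and let ξ(0) ∈ ℝ^n be arbitrary. Define the iteration z(k) = proj_{S₁}((1/2)ξ(k) + (1/2)u) and ξ(k+1) = ξ(k) + η(proj_{S₂}(2z(k) − ξ(k)) − z(k)). Then the sequence (z(k))_{k∈ℕ} converges to proj_{S₁ ∩ S₂}(u), the metric projection of u onto S₁ ∩ S₂. -/

import Mathlib

open scoped InnerProductSpace in
theorem dr_variational {E : Type*} [NormedAddCommGroup E] [InnerProductSpace ℝ E]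
    {K : Set E} (hK : Convex ℝ K) {x p : E} (hp : p ∈ K)
    (h : ∀ y ∈ K, dist x p ≤ dist x y) : ∀ y ∈ K, ⟪x - p, y - p⟫_ℝ ≤ 0 := by
  rw [← norm_eq_iInf_iff_real_inner_le_zero hK hp]
  have : Nonempty K := ⟨⟨p, hp⟩⟩
  apply le_antisymm
  · apply le_ciInf
    intro w
    have := h w w.2
    rwa [dist_eq_norm, dist_eq_norm] at this
  · exact ciInf_le (f := fun w : K => ‖x - w‖)
      ⟨0, by rintro _ ⟨w, rfl⟩; exact norm_nonneg _⟩ ⟨p, hp⟩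

theorem dr_convex_comb {E : Type*} [AddCommGroup E] [Module ℝ E]
    {S : Set E} (hS : Convex ℝ S) {r s : ℝ} (hr : 0 ≤ r) (hs : 0 ≤ s) {x y : E}
    (hx : x ∈ S) (hy : y ∈ S) : ∃ w ∈ S, (r + s) • w = r • x + s • y := by
  rcases (add_nonneg hr hs).eq_or_lt with h | h
  · have h1 : r = 0 := by linarith
    have h2 : s = 0 := by linarith
    exact ⟨x, hx, by simp [h1, h2]⟩
  · refine ⟨(r / (r + s)) • x + (s / (r + s)) • y,
      hS hx hy (by positivity) (by positivity) (by field_simp), ?_⟩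
    rw [smul_add, smul_smul, smul_smul, mul_div_cancel₀ _ h.ne', mul_div_cancel₀ _ h.ne']

theorem dr_ri {E : Type*} [NormedAddCommGroup E] [NormedSpace ℝ E]
    {S : Set E} {c : E} (hc : c ∈ intrinsicInterior ℝ S) {x : E} (hx : x ∈ S) :
    ∀ᶠ t : ℝ in nhds 0, c + t • (c - x) ∈ S := by
  rw [mem_intrinsicInterior] at hc
  obtain ⟨c', hc', rfl⟩ := hc
  have hx' : x ∈ affineSpan ℝ S := subset_affineSpan ℝ S hx
  have hmem : ∀ t : ℝ, (c' : E) + t • ((c' : E) - x) ∈ affineSpan ℝ S := by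
    intro t
    have := AffineSubspace.smul_vsub_vadd_mem (affineSpan ℝ S) t c'.2 hx' c'.2
    simpa [add_comm] using this
  have hcont : Continuous (fun t : ℝ =>
      (⟨(c' : E) + t • ((c' : E) - x), hmem t⟩ : affineSpan ℝ S)) := by
    apply Continuous.subtype_mk
    fun_prop
  have h0 : (⟨(c' : E) + (0 : ℝ) • ((c' : E) - x), hmem 0⟩ : affineSpan ℝ S) = c' := by
    ext
    simp
  have hn := hcont.continuousAt (x := 0)
  rw [ContinuousAt, h0] at hn
  have := hn (mem_interior_iff_mem_nhds.1 hc')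
  exact this

/-- The linear subspace of all nonnegative multiples of differences. -/
theorem dr_subspace {E : Type*} [NormedAddCommGroup E] [NormedSpace ℝ E]
    {S T : Set E} (hS : Convex ℝ S) (hT : Convex ℝ T) {c : E}
    (hcS : c ∈ intrinsicInterior ℝ S) (hcT : c ∈ intrinsicInterior ℝ T) :
    ∃ L : Submodule ℝ E, ∀ d, d ∈ L ↔
      ∃ r : ℝ, 0 ≤ r ∧ ∃ x ∈ S, ∃ y ∈ T, d = r • (x - y) := by
  have hc1 := intrinsicInterior_subset hcS
  have hc2 := intrinsicInterior_subset hcT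
  have hneg : ∀ d, (∃ r : ℝ, 0 ≤ r ∧ ∃ x ∈ S, ∃ y ∈ T, d = r • (x - y)) →
      (∃ r : ℝ, 0 ≤ r ∧ ∃ x ∈ S, ∃ y ∈ T, -d = r • (x - y)) := by
    rintro d ⟨r, hr, x, hx, y, hy, rfl⟩
    have h := (dr_ri hcS hx).and (dr_ri hcT hy)
    have h' := (h.filter_mono (nhdsWithin_le_nhds (s := Set.Ioi 0))).and self_mem_nhdsWithin
    obtain ⟨t, ⟨h1, h2⟩, ht⟩ := h'.exists
    have ht : 0 < t := ht
    refine ⟨r / t, by positivity, _, h1, _, h2, ?_⟩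
    have : (c + t • (c - x) - (c + t • (c - y))) = t • (y - x) := by module
    rw [this, smul_smul, div_mul_cancel₀ _ ht.ne']
    module
  have hsm : ∀ (a : ℝ), 0 ≤ a → ∀ d, (∃ r : ℝ, 0 ≤ r ∧ ∃ x ∈ S, ∃ y ∈ T, d = r • (x - y)) →
      (∃ r : ℝ, 0 ≤ r ∧ ∃ x ∈ S, ∃ y ∈ T, a • d = r • (x - y)) := by
    rintro a ha d ⟨r, hr, x, hx, y, hy, rfl⟩
    exact ⟨a * r, by positivity, x, hx, y, hy, by rw [smul_smul]⟩
  refine ⟨{ carrier := {d | ∃ r : ℝ, 0 ≤ r ∧ ∃ x ∈ S, ∃ y ∈ T, d = r • (x - y)}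
            add_mem' := ?_, zero_mem' := ?_, smul_mem' := ?_ }, fun d => Iff.rfl⟩
  · rintro _ _ ⟨r, hr, x, hx, y, hy, rfl⟩ ⟨r', hr', x', hx', y', hy', rfl⟩
    obtain ⟨v, hv, ev⟩ := dr_convex_comb hS hr hr' hx hx'
    obtain ⟨w, hw, ew⟩ := dr_convex_comb hT hr hr' hy hy'
    refine ⟨r + r', by positivity, v, hv, w, hw, ?_⟩
    rw [smul_sub (r + r'), ev, ew]
    module
  · exact ⟨0, le_rfl, c, hc1, c, hc2, by simp⟩
  · intro a d hd
    rcases le_total 0 a with ha | ha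
    · exact hsm a ha d hd
    · have := hneg _ (hsm (-a) (by linarith) d hd)
      simpa using this

open scoped InnerProductSpace in
/-- Normal cone sum rule. -/
theorem dr_normal_sum {E : Type*} [NormedAddCommGroup E] [InnerProductSpace ℝ E]
    [FiniteDimensional ℝ E]
    {S T : Set E} (hS : Convex ℝ S) (hT : Convex ℝ T) {c : E}
    (hcS : c ∈ intrinsicInterior ℝ S) (hcT : c ∈ intrinsicInterior ℝ T)
    {p g : E} (hpS : p ∈ S) (hpT : p ∈ T)
    (hg : ∀ y ∈ S ∩ T, ⟪g, y - p⟫_ℝ ≤ 0) :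
    ∃ b : E, (∀ x ∈ S, ⟪g - b, x - p⟫_ℝ ≤ 0) ∧ (∀ y ∈ T, ⟪b, y - p⟫_ℝ ≤ 0) := by
  obtain ⟨L, hL⟩ := dr_subspace hS hT hcS hcT
  let K : PointedCone ℝ (L × ℝ) :=
    { carrier := {v | ∃ r : ℝ, 0 ≤ r ∧ ∃ x ∈ S, ∃ y ∈ T,
        (v.1 : E) = r • (x - y) ∧ -⟪g, r • x - r • p⟫_ℝ ≤ v.2}
      add_mem' := by
        rintro v w ⟨r, hr, x, hx, y, hy, e, h⟩ ⟨r', hr', x', hx', y', hy', e', h'⟩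
        obtain ⟨a, ha, ea⟩ := dr_convex_comb hS hr hr' hx hx'
        obtain ⟨b, hb, eb⟩ := dr_convex_comb hT hr hr' hy hy'
        refine ⟨r + r', by positivity, a, ha, b, hb, ?_, ?_⟩
        · rw [smul_sub, ea, eb]
          simp only [Prod.fst_add, Submodule.coe_add, e, e']
          module
        · have : (r + r') • a - (r + r') • p = (r • x - r • p) + (r' • x' - r' • p) := by
            rw [ea]; module
          rw [this, inner_add_right]
          simp only [Prod.snd_add]
          linarith
      zero_mem' := ⟨0, le_rfl, p, hpS, p, hpT, by simp, by simp⟩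
      smul_mem' := by
        rintro ⟨a, ha⟩ v ⟨r, hr, x, hx, y, hy, e, h⟩
        refine ⟨a * r, by positivity, x, hx, y, hy, ?_, ?_⟩
        · have : (((⟨a, ha⟩ : {c : ℝ // 0 ≤ c}) • v).1 : E) = a • (v.1 : E) := rfl
          rw [this, e, smul_smul]
        · have h2 : ((⟨a, ha⟩ : {c : ℝ // 0 ≤ c}) • v).2 = a * v.2 := rfl
          have : (a * r) • x - (a * r) • p = a • (r • x - r • p) := by module
          rw [h2, this, inner_smul_right]
          nlinarith [mul_le_mul_of_nonneg_left h ha] }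
  have hK : ∀ v, v ∈ K ↔ ∃ r : ℝ, 0 ≤ r ∧ ∃ x ∈ S, ∃ y ∈ T,
        (v.1 : E) = r • (x - y) ∧ -⟪g, r • x - r • p⟫_ℝ ≤ v.2 := fun v => Iff.rfl
  let f : (L × ℝ) →ₗ.[ℝ] ℝ :=
    { domain := Submodule.prod ⊥ ⊤
      toFun := (LinearMap.snd ℝ L ℝ).comp (Submodule.subtype _) }
  have hfd : ∀ v : L × ℝ, v ∈ f.domain ↔ v.1 = 0 := by
    intro v
    simp [f, Submodule.mem_prod]
  have hf : ∀ v : f.domain, f v = (v : L × ℝ).2 := fun v => rfl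
  obtain ⟨φ, hφ1, hφ2⟩ := riesz_extension K f (by
      intro v hv
      obtain ⟨r, hr, x, hx, y, hy, e, h⟩ := (hK _).1 hv
      rw [hf]
      have h0 := (hfd v).1 v.2
      rw [h0] at e
      rcases hr.eq_or_lt with rfl | hr
      · simpa using h
      · have hxy : x = y := by
          have := e.symm
          simp only [Submodule.coe_zero, smul_eq_zero, hr.ne', false_or] at this
          exact sub_eq_zero.1 this
        subst hxy
        have := hg x ⟨hx, hy⟩
        rw [← smul_sub, inner_smul_right] at h
        nlinarith) (by
      rintro ⟨d, t⟩
      obtain ⟨r, hr, x, hx, y, hy, e⟩ := (hL d).1 d.2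
      refine ⟨⟨(0, -⟪g, r • x - r • p⟫_ℝ - t), (hfd _).2 rfl⟩, ?_⟩
      rw [hK]
      exact ⟨r, hr, x, hx, y, hy, by simpa using e, by simp⟩)
  obtain ⟨ψ, hψ⟩ := (φ.comp (LinearMap.inl ℝ L ℝ)).exists_extend
  have key : ∀ x ∈ S, ∀ y ∈ T, ⟪g, x - p⟫_ℝ ≤ ψ (x - y) := by
    intro x hx y hy
    have hd : x - y ∈ L := (hL _).2 ⟨1, zero_le_one, x, hx, y, hy, by simp⟩
    have h1 := hφ2 (⟨x - y, hd⟩, -⟪g, x - p⟫_ℝ)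
      ((hK _).2 ⟨1, zero_le_one, x, hx, y, hy, by simp, by simp⟩)
    have h2 := hφ1 ⟨(0, -⟪g, x - p⟫_ℝ), (hfd _).2 rfl⟩
    rw [hf] at h2
    have h3 : ψ (x - y) = φ (⟨x - y, hd⟩, 0) := by
      have := LinearMap.congr_fun hψ ⟨x - y, hd⟩
      simpa using this
    have h4 : ((⟨x - y, hd⟩ : L), -⟪g, x - p⟫_ℝ)
        = ((⟨x - y, hd⟩ : L), (0 : ℝ)) + ((0 : L), -⟪g, x - p⟫_ℝ) := by simp
    rw [h4, map_add, ← h3] at h1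
    simp only at h2
    linarith
  let b : E := (InnerProductSpace.toDual ℝ E).symm (LinearMap.toContinuousLinearMap ψ)
  have hb : ∀ v, ⟪b, v⟫_ℝ = ψ v := by
    intro v
    simp [b]
  refine ⟨b, ?_, ?_⟩
  · intro x hx
    have := key x hx p hpT
    rw [inner_sub_left, hb]
    linarith
  · intro y hy
    have := key p hpS y hy
    rw [← hb, sub_self, inner_zero_right] at this
    have h : y - p = -(p - y) := by abel
    rw [h, inner_neg_right]
    linarith

open scoped InnerProductSpace in
theorem dr_step {E : Type*} [NormedAddCommGroup E] [InnerProductSpace ℝ E]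
    (x A B Z W : E) (η : ℝ) (hη₀ : 0 < η) (hη₂ : η < 2)
    (hA : A = x - (2 : ℝ) • Z) (hB : B = (2 : ℝ) • Z - x - W)
    (h1 : 0 ≤ ⟪A, Z⟫_ℝ) (h2 : 0 ≤ ⟪B, W⟫_ℝ) :
    ‖x + η • (W - Z)‖ ^ 2 + 2 * η * ‖Z‖ ^ 2 ≤ ‖x‖ ^ 2 := by
  subst hA hB
  have e1 : ‖x + η • (W - Z)‖ ^ 2 = ‖x‖ ^ 2 + 2 * η * (⟪x, W⟫_ℝ - ⟪x, Z⟫_ℝ)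
      + η ^ 2 * ‖W - Z‖ ^ 2 := by
    rw [norm_add_sq_real, inner_smul_right, inner_sub_right, norm_smul, mul_pow,
      Real.norm_eq_abs, sq_abs]
    ring
  have e2 : ‖W - Z‖ ^ 2 = ‖W‖ ^ 2 - 2 * ⟪Z, W⟫_ℝ + ‖Z‖ ^ 2 := by
    rw [norm_sub_sq_real, real_inner_comm]
  simp only [inner_sub_left, inner_smul_left, real_inner_self_eq_norm_sq] at h1 h2
  simp only [conj_trivial] at h1 h2
  have h3 : 0 ≤ η * (2 - η) * ‖W - Z‖ ^ 2 := by
    have : 0 ≤ 2 - η := by linarith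
    positivity
  have h4 : 0 ≤ η * ((⟪x, Z⟫_ℝ - 2 * ‖Z‖ ^ 2) + (2 * ⟪Z, W⟫_ℝ - ⟪x, W⟫_ℝ - ‖W‖ ^ 2)) :=
    mul_nonneg hη₀.le (add_nonneg h1 h2)
  rw [e1]
  have e3 : η * (2 - η) * ‖W - Z‖ ^ 2 = 2 * η * ‖W - Z‖ ^ 2 - η ^ 2 * ‖W - Z‖ ^ 2 := by ring
  have e4 : 2 * η * ‖W - Z‖ ^ 2 = 2 * η * (‖W‖ ^ 2 - 2 * ⟪Z, W⟫_ℝ + ‖Z‖ ^ 2) := by rw [e2]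
  linarith

/-- Convergence of the Douglas–Rachford splitting for the best approximation
problem: if `S₁, S₂` are closed convex sets whose relative interiors
intersect, `η ∈ (0, 2)`, `P₁, P₂` are the metric projections onto `S₁, S₂`,
and the iterates satisfy `z k = P₁ ((1/2) ξ k + (1/2) u)` and
`ξ (k+1) = ξ k + η (P₂ (2 z k − ξ k) − z k)`, then `z k` converges to the
metric projection of `u` onto `S₁ ∩ S₂`. -/
theorem douglas_rachford_best_approximation
    (n : ℕ)
    (S₁ S₂ : Set (EuclideanSpace ℝ (Fin n)))
    (hS₁cl : IsClosed S₁) (hS₁cvx : Convex ℝ S₁)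
    (hS₂cl : IsClosed S₂) (hS₂cvx : Convex ℝ S₂)
    (hri : (intrinsicInterior ℝ S₁ ∩ intrinsicInterior ℝ S₂).Nonempty)
    (u : EuclideanSpace ℝ (Fin n))
    (η : ℝ) (hη₀ : 0 < η) (hη₂ : η < 2)
    (P₁ P₂ : EuclideanSpace ℝ (Fin n) → EuclideanSpace ℝ (Fin n))
    (hP₁ : ∀ x, P₁ x ∈ S₁ ∧ ∀ y ∈ S₁, dist x (P₁ x) ≤ dist x y)
    (hP₂ : ∀ x, P₂ x ∈ S₂ ∧ ∀ y ∈ S₂, dist x (P₂ x) ≤ dist x y)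
    (ξ z : ℕ → EuclideanSpace ℝ (Fin n))
    (hz : ∀ k, z k = P₁ ((2 : ℝ)⁻¹ • ξ k + (2 : ℝ)⁻¹ • u))
    (hξ : ∀ k, ξ (k + 1) = ξ k + η • (P₂ ((2 : ℝ) • z k - ξ k) - z k)) :
    ∃ p, p ∈ S₁ ∩ S₂ ∧ (∀ y ∈ S₁ ∩ S₂, dist u p ≤ dist u y) ∧
      Filter.Tendsto z Filter.atTop (nhds p) := by
  obtain ⟨c, hc1, hc2⟩ := hri
  have hcvx := hS₁cvx.inter hS₂cvx
  obtain ⟨p, hp, hpd⟩ := (hS₁cl.inter hS₂cl).exists_infDist_eq_dist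
    ⟨c, intrinsicInterior_subset hc1, intrinsicInterior_subset hc2⟩ u
  have hmin : ∀ y ∈ S₁ ∩ S₂, dist u p ≤ dist u y := fun y hy =>
    hpd ▸ Metric.infDist_le_dist_of_mem hy
  refine ⟨p, hp, hmin, ?_⟩
  obtain ⟨b, hb1, hb2⟩ := dr_normal_sum hS₁cvx hS₂cvx hc1 hc2 hp.1 hp.2
    (dr_variational hcvx hp hmin)
  have hstep : ∀ k, ‖ξ (k + 1) - (p - b)‖ ^ 2 + 2 * η * ‖z k - p‖ ^ 2
      ≤ ‖ξ k - (p - b)‖ ^ 2 := by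
    intro k
    have hzm : z k ∈ S₁ := by rw [hz]; exact (hP₁ _).1
    set w := P₂ ((2 : ℝ) • z k - ξ k) with hw
    have hwm : w ∈ S₂ := (hP₂ _).1
    have v1 := dr_variational hS₁cvx (hP₁ ((2 : ℝ)⁻¹ • ξ k + (2 : ℝ)⁻¹ • u)).1
      (hP₁ _).2 p hp.1
    rw [← hz] at v1
    have v2 := dr_variational hS₂cvx (hP₂ ((2 : ℝ) • z k - ξ k)).1 (hP₂ _).2 p hp.2
    rw [← hw] at v2
    have v3 := hb1 _ hzm
    have v4 := hb2 _ hwm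
    have := dr_step (ξ k - (p - b)) _ _ (z k - p) (w - p) η hη₀ hη₂ rfl rfl (by
      have e : ξ k - (p - b) - (2 : ℝ) • (z k - p)
          = (2 : ℝ) • ((2 : ℝ)⁻¹ • ξ k + (2 : ℝ)⁻¹ • u - z k) - (u - p - b) := by module
      have e' : p - z k = -(z k - p) := by abel
      rw [e', inner_neg_right] at v1
      rw [e, inner_sub_left, inner_smul_left]
      simp only [conj_trivial]
      linarith) (by
      have e : (2 : ℝ) • (z k - p) - (ξ k - (p - b)) - (w - p)
          = ((2 : ℝ) • z k - ξ k - w) - b := by module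
      have e' : p - w = -(w - p) := by abel
      rw [e', inner_neg_right] at v2
      rw [e, inner_sub_left]
      linarith)
    have e : ξ (k + 1) - (p - b) = ξ k - (p - b) + η • (w - p - (z k - p)) := by
      rw [hξ]; module
    rwa [e]
  have hsum : Summable (fun k => 2 * η * ‖z k - p‖ ^ 2) := by
    apply summable_of_sum_range_le (c := ‖ξ 0 - (p - b)‖ ^ 2)
    · intro k; positivity
    · intro m
      have : ∑ i ∈ Finset.range m, 2 * η * ‖z i - p‖ ^ 2 + ‖ξ m - (p - b)‖ ^ 2
          ≤ ‖ξ 0 - (p - b)‖ ^ 2 := by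
        induction m with
        | zero => simp
        | succ m ih =>
          rw [Finset.sum_range_succ]
          linarith [hstep m]
      linarith [sq_nonneg ‖ξ m - (p - b)‖]
  have ht := hsum.tendsto_atTop_zero
  have ht2 : Filter.Tendsto (fun k => ‖z k - p‖ ^ 2) Filter.atTop (nhds 0) := by
    have := ht.const_mul (2 * η)⁻¹
    rw [mul_zero] at this
    refine this.congr fun k => ?_
    field_simp
  rw [tendsto_iff_norm_sub_tendsto_zero]
  have ht3 := ht2.sqrt
  rw [Real.sqrt_zero] at ht3
  exact ht3.congr fun k => Real.sqrt_sq (norm_nonneg _)
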